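/- Let N ≥ 1 and let P_queen(N) be the ground normal logic program consisting of the facts num(1),…,num(N) together with the standard translation of: the generalized partition rule ⊕_C queen(R,C) ← num(R), num(C) (assigning to every row exactly one column), the constraint ⇐ queen(R₁,C), queen(R₂,C), R₁ ≠ R₂, and the constraints ⇐ queen(R₁,C₁), queen(R₂,C₂), R₁ ≠ R₂, R₁+C₁ = R₂+C₂ and ⇐ queen(R₁,C₁), queen(R₂,C₂), R₁ ≠ R₂, R₁−C₁ = R₂−C₂ (each constraint translated as c₀ ← Body, ¬c₀ with fresh c₀). Then the stable models of P_queen(N) are in bijection with the functions q : {1,…,N} → {1,…,N} such that q is injective and for all i ≠ j both i + q(i) ≠ j + q(j) and i − q(i) ≠ j − q(j); i.e., with the placements of N mutually non-attacking queens on an N × N chessboard, where the stable model corresponding to q contains exactly the atoms queen(i, q(i)). -/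

import Mathlib

/-- A ground normal logic program rule: head atom, positive body atoms, negated body atoms. -/
structure Rule (α : Type*) where
  head : α
  pos : Set α
  neg : Set α

/-- A fact is a rule with empty body. -/
def Rule.fact {α : Type*} (a : α) : Rule α := ⟨a, ∅, ∅⟩

/-- `I` is closed under the Gelfond–Lifschitz reduct `P^M`: for every rule of `P` whose
negated body atoms are all outside `M`, if the positive body is contained in `I` then
so is the head. -/
def ClosedUnderReduct {α : Type*} (P : Set (Rule α)) (M I : Set α) : Prop :=
  ∀ r ∈ P, (∀ c ∈ r.neg, c ∉ M) → r.pos ⊆ I → r.head ∈ I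

/-- Least model of the reduct `P^M`: the least set of atoms closed under its rules. -/
def LeastReductModel {α : Type*} (P : Set (Rule α)) (M : Set α) : Set α :=
  ⋂₀ {I | ClosedUnderReduct P M I}

/-- `M` is a stable model of `P` if it equals the least model of the reduct `P^M`. -/
def IsStableModel {α : Type*} (P : Set (Rule α)) (M : Set α) : Prop :=
  M = LeastReductModel P M

/-- Atoms of the N-Queens program (`c1`, `c2`, `c3` are the fresh constraint atoms). -/
inductive QAtom where
  | num : ℕ → QAtom
  | queen : ℕ → ℕ → QAtom
  | diff : ℕ → ℕ → QAtom
  | c1 : QAtom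
  | c2 : QAtom
  | c3 : QAtom

/-- The ground program `P_queen(N)`: facts `num(1),…,num(N)`, the translated generalized
partition rule `⊕_C queen(R,C) ← num(R), num(C)` and the three translated constraints. -/
def queenProgram (N : ℕ) : Set (Rule QAtom) :=
  {r | ∃ n ∈ Finset.Icc 1 N, r = Rule.fact (QAtom.num n)} ∪
  {r | ∃ x ∈ Finset.Icc 1 N, ∃ c ∈ Finset.Icc 1 N,
      r = ⟨QAtom.queen x c, ∅, {QAtom.diff x c}⟩} ∪
  {r | ∃ x ∈ Finset.Icc 1 N, ∃ c ∈ Finset.Icc 1 N, ∃ c' ∈ Finset.Icc 1 N, c' ≠ c ∧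
      r = ⟨QAtom.diff x c, {QAtom.queen x c'}, ∅⟩} ∪
  {r | ∃ r1 ∈ Finset.Icc 1 N, ∃ r2 ∈ Finset.Icc 1 N, ∃ c ∈ Finset.Icc 1 N, r1 ≠ r2 ∧
      r = ⟨QAtom.c1, {QAtom.queen r1 c, QAtom.queen r2 c}, {QAtom.c1}⟩} ∪
  {r | ∃ r1 ∈ Finset.Icc 1 N, ∃ c1 ∈ Finset.Icc 1 N, ∃ r2 ∈ Finset.Icc 1 N,
      ∃ c2 ∈ Finset.Icc 1 N, r1 ≠ r2 ∧ r1 + c1 = r2 + c2 ∧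
      r = ⟨QAtom.c2, {QAtom.queen r1 c1, QAtom.queen r2 c2}, {QAtom.c2}⟩} ∪
  {r | ∃ r1 ∈ Finset.Icc 1 N, ∃ c1 ∈ Finset.Icc 1 N, ∃ r2 ∈ Finset.Icc 1 N,
      ∃ c2 ∈ Finset.Icc 1 N, r1 ≠ r2 ∧ (r1 : ℤ) - (c1 : ℤ) = (r2 : ℤ) - (c2 : ℤ) ∧
      r = ⟨QAtom.c3, {QAtom.queen r1 c1, QAtom.queen r2 c2}, {QAtom.c3}⟩}

/-!
A constraint `c ← B, ¬c` can never support its own head, so adding constraints to a program only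
eliminates the stable models in which some constraint body `B` is true; facts on atoms occurring
nowhere else are merely adjoined to every stable model. It remains to solve the partition rule: in
a stable model `d(i,k)` is the complement of `a(i,k)`, and `d(i,k)` holds exactly when some
`a(i,l)` with `l ≠ k` does, so `{(i,k) | a(i,k)}` is the graph of a function, and every function
arises in this way.
-/

section StableModels

variable {α : Type*} {P Q C : Set (Rule α)} {F I M : Set α}

/-- The body of `r` is true in the interpretation `M`. -/
def Rule.BodyTrue (r : Rule α) (M : Set α) : Prop :=
  (∀ c ∈ r.neg, c ∉ M) ∧ r.pos ⊆ M

/-- The atoms occurring in a rule, in its head or in its body. -/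
def Rule.atoms (r : Rule α) : Set α :=
  insert r.head (r.pos ∪ r.neg)

/-- The integrity constraint `⇐ B`, translated as `c ← B, ¬c`. -/
def Rule.constraint (c : α) (B : Set α) : Rule α :=
  ⟨c, B, {c}⟩

theorem Rule.bodyTrue_constraint {c : α} {B : Set α} (hc : c ∉ M) :
    (Rule.constraint c B).BodyTrue M ↔ B ⊆ M := by
  simp [Rule.BodyTrue, Rule.constraint, hc]

theorem ClosedUnderReduct.inter (hI : ClosedUnderReduct P M I)
    (hM : ClosedUnderReduct P M M) : ClosedUnderReduct P M (I ∩ M) :=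
  fun r hr hneg hpos =>
    ⟨hI r hr hneg (hpos.trans Set.inter_subset_left),
      hM r hr hneg (hpos.trans Set.inter_subset_right)⟩

theorem closedUnderReduct_union :
    ClosedUnderReduct (P ∪ Q) M I ↔ ClosedUnderReduct P M I ∧ ClosedUnderReduct Q M I := by
  simp only [ClosedUnderReduct, Set.mem_union, or_imp, forall_and]

theorem closedUnderReduct_image_fact : ClosedUnderReduct (Rule.fact '' F) M I ↔ F ⊆ I := by
  simp [ClosedUnderReduct, Rule.fact, Set.subset_def]

theorem closedUnderReduct_sdiff_iff (hF : ∀ r ∈ P, Disjoint r.atoms F) :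
    ClosedUnderReduct P (M \ F) (I \ F) ↔ ClosedUnderReduct P M I := by
  refine forall₂_congr fun r hr => ?_
  have notMem : ∀ a ∈ r.atoms, a ∉ F := fun _ => (Set.disjoint_left.1 (hF r hr) ·)
  have neg_iff : (∀ c ∈ r.neg, c ∉ M \ F) ↔ ∀ c ∈ r.neg, c ∉ M :=
    forall₂_congr fun c hc => by simp [notMem c (Or.inr (Or.inr hc))]
  have pos_iff : r.pos ⊆ I \ F ↔ r.pos ⊆ I :=
    forall₂_congr fun b hb => by simp [notMem b (Or.inr (Or.inl hb))]
  have head_iff : r.head ∈ I \ F ↔ r.head ∈ I := by simp [notMem r.head (Or.inl rfl)]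
  rw [neg_iff, pos_iff, head_iff]

theorem closedUnderReduct_leastReductModel : ClosedUnderReduct P M (LeastReductModel P M) :=
  fun r hr hneg hpos _ hI => hI r hr hneg (hpos.trans (Set.sInter_subset_of_mem hI))

theorem isStableModel_iff_isLeast :
    IsStableModel P M ↔ IsLeast {I | ClosedUnderReduct P M I} M := by
  have least : IsLeast {I | ClosedUnderReduct P M I} (LeastReductModel P M) :=
    ⟨closedUnderReduct_leastReductModel, fun _ => Set.sInter_subset_of_mem⟩
  rw [IsStableModel]
  constructor
  · intro hM
    rwa [← hM] at least
  · exact fun hM => hM.unique least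

namespace IsStableModel

theorem closedUnderReduct (hM : IsStableModel P M) : ClosedUnderReduct P M M :=
  (isStableModel_iff_isLeast.1 hM).1

theorem subset_of_closedUnderReduct (hM : IsStableModel P M) (hI : ClosedUnderReduct P M I) :
    M ⊆ I :=
  (isStableModel_iff_isLeast.1 hM).2 hI

theorem mem_iff_exists_rule (hM : IsStableModel P M) {a : α} :
    a ∈ M ↔ ∃ r ∈ P, r.BodyTrue M ∧ r.head = a := by
  constructor
  · have supported : ClosedUnderReduct P M (M ∩ {a | ∃ r ∈ P, r.BodyTrue M ∧ r.head = a}) := by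
      intro r hr hneg hpos
      have body : r.BodyTrue M := ⟨hneg, hpos.trans Set.inter_subset_left⟩
      exact ⟨hM.closedUnderReduct r hr body.1 body.2, r, hr, body, rfl⟩
    exact fun ha => (hM.subset_of_closedUnderReduct supported ha).2
  · rintro ⟨r, hr, ⟨hneg, hpos⟩, rfl⟩
    exact hM.closedUnderReduct r hr hneg hpos

theorem disjoint_of_atoms (hM : IsStableModel P M) (hF : ∀ r ∈ P, Disjoint r.atoms F) :
    Disjoint M F := by
  refine Set.disjoint_left.2 fun a ha => ?_
  obtain ⟨r, hr, -, rfl⟩ := hM.mem_iff_exists_rule.1 ha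
  exact Set.disjoint_left.1 (hF r hr) (Set.mem_insert _ _)

end IsStableModel

theorem isStableModel_union_iff_of_head_mem_neg (hC : ∀ r ∈ C, r.head ∈ r.neg) :
    IsStableModel (P ∪ C) M ↔ IsStableModel P M ∧ ∀ r ∈ C, ¬ r.BodyTrue M := by
  have closed_of_subset :
      (∀ r ∈ C, ¬ r.BodyTrue M) → ∀ I ⊆ M, ClosedUnderReduct C M I :=
    fun hbody _ hIM r hr hneg hpos => absurd ⟨hneg, hpos.trans hIM⟩ (hbody r hr)
  constructor
  · intro hM
    obtain ⟨hP, hCM⟩ := closedUnderReduct_union.1 hM.closedUnderReduct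
    have hbody : ∀ r ∈ C, ¬ r.BodyTrue M :=
      fun r hr ⟨hneg, hpos⟩ => hneg _ (hC r hr) (hCM r hr hneg hpos)
    refine ⟨isStableModel_iff_isLeast.2 ⟨hP, fun I hI => ?_⟩, hbody⟩
    have hIM : ClosedUnderReduct (P ∪ C) M (I ∩ M) :=
      closedUnderReduct_union.2 ⟨hI.inter hP, closed_of_subset hbody _ Set.inter_subset_right⟩
    exact (hM.subset_of_closedUnderReduct hIM).trans Set.inter_subset_left
  · rintro ⟨hM, hbody⟩
    exact isStableModel_iff_isLeast.2
      ⟨closedUnderReduct_union.2 ⟨hM.closedUnderReduct, closed_of_subset hbody M subset_rfl⟩,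
        fun I hI => hM.subset_of_closedUnderReduct (closedUnderReduct_union.1 hI).1⟩

theorem isStableModel_image_fact_union_iff_sdiff (hF : ∀ r ∈ P, Disjoint r.atoms F) :
    IsStableModel (Rule.fact '' F ∪ P) M ↔ F ⊆ M ∧ IsStableModel P (M \ F) := by
  have closed_iff : ∀ {I : Set α}, ClosedUnderReduct (Rule.fact '' F ∪ P) M I ↔
      F ⊆ I ∧ ClosedUnderReduct P (M \ F) (I \ F) := by
    simp only [closedUnderReduct_union, closedUnderReduct_image_fact,
      closedUnderReduct_sdiff_iff hF, implies_true]
  constructor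
  · intro hM
    obtain ⟨hFM, hP⟩ := closed_iff.1 hM.closedUnderReduct
    refine ⟨hFM, isStableModel_iff_isLeast.2 ⟨hP, fun I hI => ?_⟩⟩
    have hFI : ClosedUnderReduct (Rule.fact '' F ∪ P) M (F ∪ I) := by
      refine closed_iff.2 ⟨Set.subset_union_left, ?_⟩
      rw [Set.union_sdiff_left]
      simpa only [sdiff_idem] using (closedUnderReduct_sdiff_iff hF).2 hI
    exact Set.sdiff_subset_iff.2 (hM.subset_of_closedUnderReduct hFI)
  · rintro ⟨hFM, hM⟩
    refine isStableModel_iff_isLeast.2 ⟨closed_iff.2 ⟨hFM, hM.closedUnderReduct⟩, fun I hI => ?_⟩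
    obtain ⟨hFI, hPI⟩ := closed_iff.1 hI
    have hMI : M \ F ⊆ I := (hM.subset_of_closedUnderReduct hPI).trans Set.sdiff_subset
    exact (Set.sdiff_subset_iff.1 hMI).trans (Set.union_subset hFI subset_rfl)

theorem isStableModel_image_fact_union_iff (hF : ∀ r ∈ P, Disjoint r.atoms F) :
    IsStableModel (Rule.fact '' F ∪ P) M ↔ ∃ M', IsStableModel P M' ∧ M = F ∪ M' := by
  rw [isStableModel_image_fact_union_iff_sdiff hF]
  constructor
  · rintro ⟨hFM, hM⟩
    exact ⟨M \ F, hM, (Set.union_sdiff_cancel hFM).symm⟩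
  · rintro ⟨M', hM', rfl⟩
    refine ⟨Set.subset_union_left, ?_⟩
    rwa [Set.union_sdiff_cancel_left (hM'.disjoint_of_atoms hF).symm.le_bot]

end StableModels

section Partition

variable {α ι κ : Type*} {a d : ι → κ → α} {f : ι → κ} {I M : Set α}

/-- The ground translation of the generalized partition rule `⊕_k a(i,k)`: the rules
`a(i,k) ← ¬d(i,k)` and `d(i,k) ← a(i,l)` for `l ≠ k`. -/
def partitionProgram (a d : ι → κ → α) : Set (Rule α) :=
  {r | ∃ i k, r = ⟨a i k, ∅, {d i k}⟩} ∪ {r | ∃ i k l, l ≠ k ∧ r = ⟨d i k, {a i l}, ∅⟩}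

/-- The interpretation in which `a` encodes the graph of `f` and `d` its complement. -/
def partitionModel (a d : ι → κ → α) (f : ι → κ) : Set α :=
  {x | ∃ i, x = a i (f i)} ∪ {x | ∃ i k, k ≠ f i ∧ x = d i k}

theorem disjoint_atoms_of_mem_partitionProgram {F : Set α} (ha : ∀ i k, a i k ∉ F)
    (hd : ∀ i k, d i k ∉ F) : ∀ r ∈ partitionProgram a d, Disjoint r.atoms F := by
  rintro r (⟨i, k, rfl⟩ | ⟨i, k, k', -, rfl⟩) <;> simp [Rule.atoms, ha, hd]

theorem closedUnderReduct_partitionProgram_iff :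
    ClosedUnderReduct (partitionProgram a d) M I ↔
      (∀ i k, d i k ∉ M → a i k ∈ I) ∧ ∀ i k k', k' ≠ k → a i k' ∈ I → d i k ∈ I := by
  rw [partitionProgram, closedUnderReduct_union]
  constructor
  · rintro ⟨hassign, hdiff⟩
    exact ⟨fun i k hd => hassign _ ⟨i, k, rfl⟩ (by simpa using hd) (Set.empty_subset _),
      fun i k k' hne ha => hdiff _ ⟨i, k, k', hne, rfl⟩ (by simp) (by simpa using ha)⟩
  · rintro ⟨hassign, hdiff⟩
    constructor
    · rintro r ⟨i, k, rfl⟩ hneg -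
      exact hassign i k (hneg _ rfl)
    · rintro r ⟨i, k, k', hne, rfl⟩ - hpos
      exact hdiff i k k' hne (hpos rfl)

theorem IsStableModel.subset_of_partitionProgram (hM : IsStableModel (partitionProgram a d) M) :
    M ⊆ {x | ∃ i k, x = a i k} ∪ {x | ∃ i k, x = d i k} := by
  intro x hx
  obtain ⟨r, ⟨i, k, rfl⟩ | ⟨i, k, -, -, rfl⟩, -, rfl⟩ := hM.mem_iff_exists_rule.1 hx
  exacts [Or.inl ⟨i, k, rfl⟩, Or.inr ⟨i, k, rfl⟩]

section Assign

variable (ha : Function.Injective2 a) (had : ∀ i k j l, a i k ≠ d j l)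
include ha had

theorem assign_mem_partitionModel_iff {i : ι} {k : κ} :
    a i k ∈ partitionModel a d f ↔ k = f i := by
  constructor
  · rintro (⟨j, h⟩ | ⟨j, l, -, h⟩)
    · obtain ⟨rfl, rfl⟩ := ha h
      rfl
    · exact absurd h (had i k j l)
  · rintro rfl
    exact Or.inl ⟨i, rfl⟩

theorem IsStableModel.assign_mem_iff_diff_notMem
    (hM : IsStableModel (partitionProgram a d) M) {i : ι} {k : κ} :
    a i k ∈ M ↔ d i k ∉ M := by
  refine ⟨fun h => ?_, (closedUnderReduct_partitionProgram_iff.1 hM.closedUnderReduct).1 i k⟩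
  obtain ⟨r, ⟨j, l, rfl⟩ | ⟨j, l, _, _, rfl⟩, hbody, heq⟩ := hM.mem_iff_exists_rule.1 h
  · obtain ⟨rfl, rfl⟩ := ha heq
    exact hbody.1 _ rfl
  · exact absurd heq (had i k j l).symm

end Assign

section Diff

variable (hd : Function.Injective2 d) (had : ∀ i k j l, a i k ≠ d j l)
include hd had

theorem diff_mem_partitionModel_iff {i : ι} {k : κ} :
    d i k ∈ partitionModel a d f ↔ k ≠ f i := by
  constructor
  · rintro (⟨j, h⟩ | ⟨j, l, hne, h⟩)
    · exact absurd h.symm (had j (f j) i k)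
    · obtain ⟨rfl, rfl⟩ := hd h
      exact hne
  · exact fun hne => Or.inr ⟨i, k, hne, rfl⟩

theorem IsStableModel.diff_mem_iff_exists_assign_mem
    (hM : IsStableModel (partitionProgram a d) M) {i : ι} {k : κ} :
    d i k ∈ M ↔ ∃ k', k' ≠ k ∧ a i k' ∈ M := by
  constructor
  · intro h
    obtain ⟨r, ⟨j, l, rfl⟩ | ⟨j, l, l', hne, rfl⟩, hbody, heq⟩ := hM.mem_iff_exists_rule.1 h
    · exact absurd heq (had j l i k)
    · obtain ⟨rfl, rfl⟩ := hd heq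
      exact ⟨l', hne, hbody.2 rfl⟩
  · rintro ⟨k', hne, hk'⟩
    exact (closedUnderReduct_partitionProgram_iff.1 hM.closedUnderReduct).2 i k k' hne hk'

end Diff

variable (ha : Function.Injective2 a) (hd : Function.Injective2 d)
  (had : ∀ i k j l, a i k ≠ d j l)
include ha hd had

theorem IsStableModel.existsUnique_assign_mem [Nonempty κ]
    (hM : IsStableModel (partitionProgram a d) M) (i : ι) : ∃! k, a i k ∈ M := by
  have unique : ∀ k k', a i k ∈ M → a i k' ∈ M → k' = k := by
    intro k k' hk hk'
    by_contra hne
    have hdiff : d i k ∈ M := (hM.diff_mem_iff_exists_assign_mem hd had).2 ⟨k', hne, hk'⟩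
    exact (hM.assign_mem_iff_diff_notMem ha had).1 hk hdiff
  have exists_mem : ∃ k, a i k ∈ M := by
    obtain ⟨k⟩ := ‹Nonempty κ›
    by_cases hk : d i k ∈ M
    · obtain ⟨k', -, hk'⟩ := (hM.diff_mem_iff_exists_assign_mem hd had).1 hk
      exact ⟨k', hk'⟩
    · exact ⟨k, (hM.assign_mem_iff_diff_notMem ha had).2 hk⟩
  obtain ⟨k, hk⟩ := exists_mem
  exact ⟨k, hk, fun k' => unique k k' hk⟩

theorem isStableModel_partitionModel (f : ι → κ) :
    IsStableModel (partitionProgram a d) (partitionModel a d f) := by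
  refine isStableModel_iff_isLeast.2 ⟨closedUnderReduct_partitionProgram_iff.2 ?_, fun I hI => ?_⟩
  · simp only [assign_mem_partitionModel_iff ha had, diff_mem_partitionModel_iff hd had, not_not,
      imp_self, implies_true, true_and]
    rintro i k - hne rfl
    exact hne.symm
  · obtain ⟨hassign, hdiff⟩ := closedUnderReduct_partitionProgram_iff.1 hI
    have graph_mem : ∀ i, a i (f i) ∈ I := fun i =>
      hassign i (f i) fun h => (diff_mem_partitionModel_iff hd had).1 h rfl
    rintro x (⟨i, rfl⟩ | ⟨i, k, hne, rfl⟩)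
    · exact graph_mem i
    · exact hdiff i k (f i) hne.symm (graph_mem i)

theorem isStableModel_partitionProgram_iff [Nonempty κ] :
    IsStableModel (partitionProgram a d) M ↔ ∃ f, M = partitionModel a d f := by
  constructor
  · intro hM
    choose f hf hunique using hM.existsUnique_assign_mem ha hd had
    have assign_iff : ∀ i k, a i k ∈ M ↔ k = f i :=
      fun i k => ⟨hunique i k, fun h => h ▸ hf i⟩
    have diff_iff : ∀ i k, d i k ∈ M ↔ k ≠ f i := fun i k => by
      rw [← not_iff_not, ← hM.assign_mem_iff_diff_notMem ha had, assign_iff, not_not]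
    refine ⟨f, Set.Subset.antisymm (fun x hx => ?_) ?_⟩
    · obtain ⟨i, k, rfl⟩ | ⟨i, k, rfl⟩ := hM.subset_of_partitionProgram hx
      · exact (assign_mem_partitionModel_iff ha had).2 ((assign_iff i k).1 hx)
      · exact (diff_mem_partitionModel_iff hd had).2 ((diff_iff i k).1 hx)
    · rintro x (⟨i, rfl⟩ | ⟨i, k, hne, rfl⟩)
      exacts [hf i, (diff_iff i k).2 hne]
  · rintro ⟨f, rfl⟩
    exact isStableModel_partitionModel ha hd had f

end Partition

section PairConstraints

variable {α ι κ : Type*} {a : ι → κ → α} {c : α} {A : ι → κ → ι → κ → Prop} {f : ι → κ}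
  {M : Set α}

/-- The constraints `⇐ a(i,k), a(j,l), i ≠ j, A(i,k,j,l)`, all translated with the atom `c`. -/
def pairConstraints (a : ι → κ → α) (c : α) (A : ι → κ → ι → κ → Prop) : Set (Rule α) :=
  {r | ∃ i k j l, i ≠ j ∧ A i k j l ∧ r = Rule.constraint c {a i k, a j l}}

theorem head_mem_neg_of_mem_pairConstraints :
    ∀ r ∈ pairConstraints a c A, r.head ∈ r.neg := by
  rintro r ⟨i, k, j, l, -, -, rfl⟩
  rfl

theorem forall_pairConstraints_not_bodyTrue_iff (hc : c ∉ M)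
    (hM : ∀ i k, a i k ∈ M ↔ k = f i) :
    (∀ r ∈ pairConstraints a c A, ¬ r.BodyTrue M) ↔ ∀ i j, i ≠ j → ¬ A i (f i) j (f j) := by
  constructor
  · refine fun h i j hne hA => h _ ⟨i, f i, j, f j, hne, hA, rfl⟩ ?_
    exact (Rule.bodyTrue_constraint hc).2 (Set.pair_subset ((hM _ _).2 rfl) ((hM _ _).2 rfl))
  · rintro h r ⟨i, k, j, l, hne, hA, rfl⟩ hbody
    obtain ⟨hik, hjl⟩ := Set.pair_subset_iff.1 ((Rule.bodyTrue_constraint hc).1 hbody)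
    obtain rfl := (hM i k).1 hik
    obtain rfl := (hM j l).1 hjl
    exact h i j hne hA

end PairConstraints

section Queens

variable {N : ℕ}

/-- The index of a row or a column of the `N × N` chessboard. -/
abbrev Line (N : ℕ) : Type :=
  {n : ℕ // n ∈ Finset.Icc 1 N}

/-- The domain atoms `num(1),…,num(N)`. -/
def numAtoms (N : ℕ) : Set QAtom :=
  {a | ∃ n ∈ Finset.Icc 1 N, a = QAtom.num n}

/-- The atom `queen(r,c)` on the squares of the chessboard. -/
def queenAtom (r c : Line N) : QAtom :=
  QAtom.queen r c

/-- The atom `diff(r,c)` on the squares of the chessboard. -/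
def diffAtom (r c : Line N) : QAtom :=
  QAtom.diff r c

/-- The constraints forbidding two queens in a common column, antidiagonal or diagonal. -/
def queenConstraints (N : ℕ) : Set (Rule QAtom) :=
  pairConstraints (queenAtom (N := N)) QAtom.c1 (fun _ k _ l => k = l) ∪
  pairConstraints (queenAtom (N := N)) QAtom.c2 (fun i k j l => (i : ℕ) + k = j + l) ∪
  pairConstraints (queenAtom (N := N)) QAtom.c3
    (fun i k j l => ((i : ℕ) : ℤ) - ((k : ℕ) : ℤ) = ((j : ℕ) : ℤ) - ((l : ℕ) : ℤ))

/-- The stable model encoding the placement of a queen at `(r, q r)` in each row `r`. -/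
def queenModel (q : Line N → Line N) : Set QAtom :=
  numAtoms N ∪ partitionModel queenAtom diffAtom q

/-- No two of the queens at the squares `(r, q r)` attack each other. -/
def NonAttacking (q : Line N → Line N) : Prop :=
  Function.Injective q ∧
    ∀ i j : Line N, i ≠ j →
      (i : ℕ) + (q i : ℕ) ≠ (j : ℕ) + (q j : ℕ) ∧
      ((i : ℕ) : ℤ) - ((q i : ℕ) : ℤ) ≠ ((j : ℕ) : ℤ) - ((q j : ℕ) : ℤ)

theorem queenAtom_injective2 : Function.Injective2 (queenAtom (N := N)) :=
  fun _ _ _ _ h => by simpa only [queenAtom, QAtom.queen.injEq, ← Subtype.ext_iff] using h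

theorem diffAtom_injective2 : Function.Injective2 (diffAtom (N := N)) :=
  fun _ _ _ _ h => by simpa only [diffAtom, QAtom.diff.injEq, ← Subtype.ext_iff] using h

theorem queenAtom_ne_diffAtom (r c r' c' : Line N) : queenAtom r c ≠ diffAtom r' c' :=
  nofun

theorem queenProgram_eq_union (N : ℕ) :
    queenProgram N =
      Rule.fact '' numAtoms N ∪ partitionProgram (queenAtom (N := N)) diffAtom ∪
        queenConstraints N := by
  ext r
  constructor
  · rintro (((((⟨n, hn, rfl⟩ | ⟨x, hx, c, hc, rfl⟩) | ⟨x, hx, c, hc, c', hc', hne, rfl⟩) |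
      ⟨x, hx, y, hy, c, hc, hne, rfl⟩) | ⟨x, hx, c, hc, y, hy, c', hc', hne, hsum, rfl⟩) |
      ⟨x, hx, c, hc, y, hy, c', hc', hne, hsub, rfl⟩)
    · exact Or.inl (Or.inl ⟨_, ⟨n, hn, rfl⟩, rfl⟩)
    · exact Or.inl (Or.inr (Or.inl ⟨⟨x, hx⟩, ⟨c, hc⟩, rfl⟩))
    · exact Or.inl (Or.inr (Or.inr
        ⟨⟨x, hx⟩, ⟨c, hc⟩, ⟨c', hc'⟩, mt (congrArg Subtype.val) hne, rfl⟩))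
    · exact Or.inr (Or.inl (Or.inl
        ⟨⟨x, hx⟩, ⟨c, hc⟩, ⟨y, hy⟩, ⟨c, hc⟩, mt (congrArg Subtype.val) hne, rfl, rfl⟩))
    · exact Or.inr (Or.inl (Or.inr
        ⟨⟨x, hx⟩, ⟨c, hc⟩, ⟨y, hy⟩, ⟨c', hc'⟩, mt (congrArg Subtype.val) hne, hsum, rfl⟩))
    · exact Or.inr (Or.inr
        ⟨⟨x, hx⟩, ⟨c, hc⟩, ⟨y, hy⟩, ⟨c', hc'⟩, mt (congrArg Subtype.val) hne, hsub, rfl⟩)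
  · rintro ((⟨_, ⟨n, hn, rfl⟩, rfl⟩ | ⟨x, c, rfl⟩ | ⟨x, c, c', hne, rfl⟩) |
      (⟨x, c, y, _, hne, rfl, rfl⟩ | ⟨x, c, y, c', hne, hsum, rfl⟩) |
      ⟨x, c, y, c', hne, hsub, rfl⟩)
    · exact Or.inl (Or.inl (Or.inl (Or.inl (Or.inl ⟨n, hn, rfl⟩))))
    · exact Or.inl (Or.inl (Or.inl (Or.inl (Or.inr ⟨x, x.2, c, c.2, rfl⟩))))
    · exact Or.inl (Or.inl (Or.inl (Or.inr
        ⟨x, x.2, c, c.2, c', c'.2, Subtype.coe_ne_coe.2 hne, rfl⟩)))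
    · exact Or.inl (Or.inl (Or.inr ⟨x, x.2, y, y.2, c, c.2, Subtype.coe_ne_coe.2 hne, rfl⟩))
    · exact Or.inl (Or.inr
        ⟨x, x.2, c, c.2, y, y.2, c', c'.2, Subtype.coe_ne_coe.2 hne, hsum, rfl⟩)
    · exact Or.inr ⟨x, x.2, c, c.2, y, y.2, c', c'.2, Subtype.coe_ne_coe.2 hne, hsub, rfl⟩

theorem head_mem_neg_of_mem_queenConstraints : ∀ r ∈ queenConstraints N, r.head ∈ r.neg := by
  rintro r ((hr | hr) | hr) <;> exact head_mem_neg_of_mem_pairConstraints r hr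

theorem queenAtom_mem_queenModel_iff {q : Line N → Line N} (r c : Line N) :
    queenAtom r c ∈ queenModel q ↔ c = q r := by
  rw [← assign_mem_partitionModel_iff queenAtom_injective2 queenAtom_ne_diffAtom]
  exact or_iff_right nofun

theorem forall_queenConstraints_not_bodyTrue_iff {q : Line N → Line N} :
    (∀ r ∈ queenConstraints N, ¬ r.BodyTrue (queenModel q)) ↔ NonAttacking q := by
  obtain ⟨c1_notMem, c2_notMem, c3_notMem⟩ :
      QAtom.c1 ∉ queenModel q ∧ QAtom.c2 ∉ queenModel q ∧ QAtom.c3 ∉ queenModel q := by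
    simp [queenModel, numAtoms, partitionModel, queenAtom, diffAtom]
  have injective_iff : Function.Injective q ↔ ∀ i j, i ≠ j → q i ≠ q j :=
    forall₂_congr fun _ _ => not_imp_not.symm
  simp only [queenConstraints, Set.mem_union, or_imp, forall_and, NonAttacking, injective_iff,
    forall_pairConstraints_not_bodyTrue_iff c1_notMem queenAtom_mem_queenModel_iff,
    forall_pairConstraints_not_bodyTrue_iff c2_notMem queenAtom_mem_queenModel_iff,
    forall_pairConstraints_not_bodyTrue_iff c3_notMem queenAtom_mem_queenModel_iff,
    ne_eq, and_assoc]

theorem isStableModel_queenProgram_iff [Nonempty (Line N)] {M : Set QAtom} :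
    IsStableModel (queenProgram N) M ↔
      ∃ q : Line N → Line N, NonAttacking q ∧ M = queenModel q := by
  have atoms_disjoint :
      ∀ r ∈ partitionProgram (queenAtom (N := N)) diffAtom, Disjoint r.atoms (numAtoms N) :=
    disjoint_atoms_of_mem_partitionProgram (by simp [queenAtom, numAtoms])
      (by simp [diffAtom, numAtoms])
  have generate :
      IsStableModel (Rule.fact '' numAtoms N ∪ partitionProgram (queenAtom (N := N)) diffAtom) M ↔
        ∃ q : Line N → Line N, M = queenModel q := by
    simp only [isStableModel_image_fact_union_iff atoms_disjoint,
      isStableModel_partitionProgram_iff queenAtom_injective2 diffAtom_injective2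
        queenAtom_ne_diffAtom]
    exact ⟨fun ⟨_, ⟨q, rfl⟩, hM⟩ => ⟨q, hM⟩, fun ⟨q, hM⟩ => ⟨_, ⟨q, rfl⟩, hM⟩⟩
  rw [queenProgram_eq_union,
    isStableModel_union_iff_of_head_mem_neg head_mem_neg_of_mem_queenConstraints, generate]
  constructor
  · rintro ⟨⟨q, rfl⟩, htest⟩
    exact ⟨q, forall_queenConstraints_not_bodyTrue_iff.1 htest, rfl⟩
  · rintro ⟨q, hq, rfl⟩
    exact ⟨⟨q, rfl⟩, forall_queenConstraints_not_bodyTrue_iff.2 hq⟩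

theorem queenModel_eq_union (q : Line N → Line N) :
    queenModel q =
      {a | ∃ n ∈ Finset.Icc 1 N, a = QAtom.num n} ∪
        {a | ∃ i : Line N, a = QAtom.queen i (q i)} ∪
        {a | ∃ (i : Line N) (c : ℕ), c ∈ Finset.Icc 1 N ∧ c ≠ (q i : ℕ) ∧
          a = QAtom.diff i c} := by
  have diff_iff : ∀ a, (∃ i c : Line N, c ≠ q i ∧ a = diffAtom i c) ↔
      ∃ (i : Line N) (c : ℕ), c ∈ Finset.Icc 1 N ∧ c ≠ (q i : ℕ) ∧ a = QAtom.diff i c :=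
    fun a => exists_congr fun i =>
      ⟨fun ⟨c, hne, ha⟩ => ⟨c, c.2, Subtype.coe_ne_coe.2 hne, ha⟩,
        fun ⟨c, hc, hne, ha⟩ => ⟨⟨c, hc⟩, mt (congrArg Subtype.val) hne, ha⟩⟩
  simp only [queenModel, numAtoms, partitionModel, queenAtom, diff_iff, Set.union_assoc]

end Queens

theorem stmt11 (N : ℕ) (hN : 1 ≤ N) :
    ∀ M : Set QAtom, IsStableModel (queenProgram N) M ↔
      ∃ q : {n : ℕ // n ∈ Finset.Icc 1 N} → {n : ℕ // n ∈ Finset.Icc 1 N},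
        Function.Injective q ∧
        (∀ i j : {n : ℕ // n ∈ Finset.Icc 1 N}, i ≠ j →
          (i : ℕ) + (q i : ℕ) ≠ (j : ℕ) + (q j : ℕ) ∧
          ((i : ℕ) : ℤ) - ((q i : ℕ) : ℤ) ≠ ((j : ℕ) : ℤ) - ((q j : ℕ) : ℤ)) ∧
        M = {a | ∃ n ∈ Finset.Icc 1 N, a = QAtom.num n} ∪
            {a | ∃ i : {n : ℕ // n ∈ Finset.Icc 1 N}, a = QAtom.queen (i : ℕ) (q i : ℕ)} ∪
            {a | ∃ (i : {n : ℕ // n ∈ Finset.Icc 1 N}) (c : ℕ), c ∈ Finset.Icc 1 N ∧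
                c ≠ (q i : ℕ) ∧ a = QAtom.diff (i : ℕ) c} := by
  intro M
  have : Nonempty (Line N) := ⟨⟨1, Finset.mem_Icc.2 ⟨le_rfl, hN⟩⟩⟩
  simp only [isStableModel_queenProgram_iff, queenModel_eq_union, NonAttacking, and_assoc]
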